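/- Let λ > 0, β ≥ 0, let S and R be Borel probability measures on [0,∞) with finite first moments μ₁ and γ₁ and Laplace transforms S̃, R̃, and define h(z) = λ + β − λz − β R̃(λ − λz) and δ(z) = S̃(h(z)) for z ∈ [0,1]. If the stability condition λμ₁(1 + βγ₁) < 1 holds, then δ(u) > u for every u ∈ [0,1). -/

import Mathlib

open MeasureTheory

/-- Laplace transform of a (Borel) measure on `ℝ`. -/
noncomputable def lapl (μ : Measure ℝ) (θ : ℝ) : ℝ :=
  ∫ x, Real.exp (-θ * x) ∂μ

/-!
A job needing service `x` stays with the server for `x` plus a compound Poisson (rate `β`, jump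
law `R`) sum of repair times, so its completion time has Laplace transform `S̃(ψ(θ))` with
`ψ(θ) = θ + β(1 - R̃(θ))`, and `δ(u) = S̃(ψ(λ(1 - u)))`. The tangent inequality `1 - t ≤ e⁻ᵗ`,
applied under `R` and then under `S`, bounds this transform below by its tangent line at `0`,
`1 - θ μ₁(1 + βγ₁)`. At `θ = λ(1 - u)` stability says exactly that this line lies above `u`.
-/

section Laplace

variable {μ : Measure ℝ} [IsFiniteMeasure μ] {θ : ℝ}

theorem integrable_exp_neg_mul (hμ : ∀ᵐ x ∂μ, 0 ≤ x) (hθ : 0 ≤ θ) :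
    Integrable (fun x => Real.exp (-θ * x)) μ := by
  simpa only [neg_mul, mul_neg] using
    ProbabilityTheory.integrable_exp_mul_of_le θ 0 hθ measurable_neg.aemeasurable
      (hμ.mono fun _ => neg_nonpos.2)

theorem lapl_le_measureReal_univ (hμ : ∀ᵐ x ∂μ, 0 ≤ x) (hθ : 0 ≤ θ) :
    lapl μ θ ≤ μ.real Set.univ := by
  have hle : ∀ᵐ x ∂μ, Real.exp (-θ * x) ≤ 1 := by
    filter_upwards [hμ] with x hx
    exact Real.exp_le_one_iff.2 (mul_nonpos_of_nonpos_of_nonneg (neg_nonpos.2 hθ) hx)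
  calc
    lapl μ θ ≤ ∫ _, (1 : ℝ) ∂μ :=
      integral_mono_ae (integrable_exp_neg_mul hμ hθ) (integrable_const 1) hle
    _ = μ.real Set.univ := by simp

theorem measureReal_univ_sub_mul_integral_le_lapl (hint : Integrable (fun x => x) μ)
    (hexp : Integrable (fun x => Real.exp (-θ * x)) μ) :
    μ.real Set.univ - θ * ∫ x, x ∂μ ≤ lapl μ θ :=
  calc
    μ.real Set.univ - θ * ∫ x, x ∂μ = ∫ x, (1 - θ * x) ∂μ := by
      rw [integral_sub (integrable_const 1) (hint.const_mul θ), integral_const_mul]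
      simp
    _ ≤ lapl μ θ :=
      integral_mono ((integrable_const 1).sub (hint.const_mul θ)) hexp fun x => by
        simpa only [neg_mul] using Real.one_sub_le_exp_neg (θ * x)

end Laplace

/-- The exponent `ψ(θ) = θ + β(1 - R̃(θ))` for which service of length `x`, interrupted at rate `β`
by repairs with law `R`, takes a total time with Laplace transform `exp(-x ψ(θ))`. In the notation
of the theorem, `h(z) = ψ(λ(1 - z))`. -/
noncomputable def completionExponent (β : ℝ) (R : Measure ℝ) (θ : ℝ) : ℝ :=
  θ + β * (1 - lapl R θ)

section CompletionExponent

variable {β θ : ℝ} {S R : Measure ℝ} [IsProbabilityMeasure S] [IsProbabilityMeasure R]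

theorem completionExponent_nonneg (hβ : 0 ≤ β) (hR : ∀ᵐ x ∂ R, 0 ≤ x) (hθ : 0 ≤ θ) :
    0 ≤ completionExponent β R θ := by
  have hle : lapl R θ ≤ 1 := by simpa using lapl_le_measureReal_univ hR hθ
  exact add_nonneg hθ (mul_nonneg hβ (sub_nonneg.2 hle))

theorem completionExponent_le (hβ : 0 ≤ β) (hint : Integrable (fun x => x) R)
    (hexp : Integrable (fun x => Real.exp (-θ * x)) R) :
    completionExponent β R θ ≤ θ * (1 + β * ∫ x, x ∂ R) := by
  have hge : 1 - θ * ∫ x, x ∂ R ≤ lapl R θ := by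
    simpa using measureReal_univ_sub_mul_integral_le_lapl hint hexp
  calc
    completionExponent β R θ ≤ θ + β * (θ * ∫ x, x ∂ R) := by
      unfold completionExponent
      gcongr
      exact sub_le_comm.1 hge
    _ = θ * (1 + β * ∫ x, x ∂ R) := by ring

theorem one_sub_mul_le_lapl_completionExponent (hβ : 0 ≤ β)
    (hS : ∀ᵐ x ∂S, 0 ≤ x) (hR : ∀ᵐ x ∂ R, 0 ≤ x)
    (hintS : Integrable (fun x => x) S) (hintR : Integrable (fun x => x) R) (hθ : 0 ≤ θ) :
    1 - θ * ((∫ x, x ∂S) * (1 + β * ∫ x, x ∂ R)) ≤ lapl S (completionExponent β R θ) := by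
  have hmean : 0 ≤ ∫ x, x ∂S := integral_nonneg_of_ae hS
  have hψ : completionExponent β R θ ≤ θ * (1 + β * ∫ x, x ∂ R) :=
    completionExponent_le hβ hintR (integrable_exp_neg_mul hR hθ)
  have hexpS := integrable_exp_neg_mul hS (completionExponent_nonneg hβ hR hθ)
  calc
    1 - θ * ((∫ x, x ∂S) * (1 + β * ∫ x, x ∂ R))
        = 1 - θ * (1 + β * ∫ x, x ∂ R) * ∫ x, x ∂S := by ring
    _ ≤ 1 - completionExponent β R θ * ∫ x, x ∂S := by gcongr
    _ ≤ lapl S (completionExponent β R θ) := by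
      simpa using measureReal_univ_sub_mul_integral_le_lapl hintS hexpS

end CompletionExponent

/-- under the stability condition `λμ₁(1 + βγ₁) < 1`, the generating
function `δ(z) = S̃(h(z))` satisfies `δ(u) > u` for every `u ∈ [0,1)`. -/
theorem delta_above_diagonal (lam beta : ℝ) (hlam : 0 < lam) (hbeta : 0 ≤ beta)
    (S R : Measure ℝ) [IsProbabilityMeasure S] [IsProbabilityMeasure R]
    (hS0 : S (Set.Iio 0) = 0) (hR0 : R (Set.Iio 0) = 0)
    (hintS : Integrable (fun x => x) S) (hintR : Integrable (fun x => x) R)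
    (mu1 gamma1 : ℝ) (hmu1 : mu1 = ∫ x, x ∂S) (hgamma1 : gamma1 = ∫ x, x ∂ R)
    (h δ : ℝ → ℝ)
    (hh : ∀ z, h z = lam + beta - lam * z - beta * lapl R (lam - lam * z))
    (hδ : ∀ z, δ z = lapl S (h z))
    (hstab : lam * mu1 * (1 + beta * gamma1) < 1) :
    ∀ u ∈ Set.Ico (0 : ℝ) 1, u < δ u := by
  rintro u ⟨-, hu⟩
  have hS : ∀ᵐ x ∂S, 0 ≤ x := by simpa using measure_eq_zero_iff_ae_notMem.1 hS0
  have hR : ∀ᵐ x ∂ R, 0 ≤ x := by simpa using measure_eq_zero_iff_ae_notMem.1 hR0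
  have hθ : 0 ≤ lam - lam * u := sub_nonneg.2 (mul_le_of_le_one_right hlam.le hu.le)
  have hψ : h u = completionExponent beta R (lam - lam * u) := by
    rw [hh, completionExponent]
    ring
  calc
    u = 1 - (1 - u) * 1 := by ring
    _ < 1 - (1 - u) * (lam * mu1 * (1 + beta * gamma1)) := by
      have : 0 < 1 - u := sub_pos.2 hu
      gcongr
    _ = 1 - (lam - lam * u) * (mu1 * (1 + beta * gamma1)) := by ring
    _ ≤ lapl S (completionExponent beta R (lam - lam * u)) := by
      rw [hmu1, hgamma1]
      exact one_sub_mul_le_lapl_completionExponent hbeta hS hR hintS hintR hθ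
    _ = δ u := by rw [hδ, hψ]
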